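/- Let D ⊆ ℂ be open, let x₀, α : D → ℂ be holomorphic, let Ω ⊆ ℂ² be an open set containing the graph {(x₀(y), y) : y ∈ D}, and let ũ, ψ̃ : Ω → ℂ be holomorphic. For (x,y) ∈ Ω with x ≠ x₀(y), define u(x,y) := 2/(x − x₀(y))² + ũ(x,y) and ψ(x,y) := α(y)/(x − x₀(y)) + ψ̃(x,y), and assume ∂_yψ − ∂_x²ψ + uψ = 0 holds at all such points. Set w(y) := ∂_xũ(x₀(y), y). Then α(y)·(x₀''(y) − 2w(y)) = 0 for all y ∈ D; in particular x₀''(y) = 2w(y) at every y ∈ D with α(y) ≠ 0. -/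

import Mathlib

/-- Partial derivative in the first (x) variable of a function on ℂ². -/
noncomputable def pdx (f : ℂ × ℂ → ℂ) : ℂ × ℂ → ℂ :=
  fun q => deriv (fun x => f (x, q.2)) q.1

/-- Partial derivative in the second (y) variable of a function on ℂ². -/
noncomputable def pdy (f : ℂ × ℂ → ℂ) : ℂ × ℂ → ℂ :=
  fun q => deriv (fun y => f (q.1, y)) q.2

/-- The meromorphic solution `ψ = α(y)/(x − x₀(y)) + ψ̃(x,y)`. -/
noncomputable def psiPole (x₀ α : ℂ → ℂ) (ψt : ℂ × ℂ → ℂ) : ℂ × ℂ → ℂ :=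
  fun q => α q.2 / (q.1 - x₀ q.2) + ψt q

/-- The potential `u = 2/(x − x₀(y))² + ũ(x,y)`. -/
noncomputable def uPole (x₀ : ℂ → ℂ) (ut : ℂ × ℂ → ℂ) : ℂ × ℂ → ℂ :=
  fun q => 2 / (q.1 - x₀ q.2) ^ 2 + ut q

open Filter Topology

/-- The `y`-derivative of a holomorphic function of two variables is continuous in `x`. -/
theorem tendsto_pdy_fst {Ω : Set (ℂ × ℂ)} (hΩ : IsOpen Ω) {f : ℂ × ℂ → ℂ}
    (hf : DifferentiableOn ℂ f Ω) {c y : ℂ} (hc : (c, y) ∈ Ω) :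
    Tendsto (fun x => pdy f (x, y)) (𝓝 c) (𝓝 (pdy f (c, y))) := by
  obtain ⟨r, hr, hsub⟩ := Metric.nhds_basis_closedBall.mem_iff.1 (hΩ.mem_nhds hc)
  rw [← closedBall_prod_same] at hsub
  have hunif : TendstoUniformlyOn (fun x z => f (x, z)) (fun z => f (c, z)) (𝓝 c)
      (Metric.closedBall y r) := by
    have hcont : UniformContinuousOn (↿(fun x z => f (x, z)))
        (Metric.closedBall c r ×ˢ Metric.closedBall y r) :=
      ((isCompact_closedBall c r).prod
        (isCompact_closedBall y r)).uniformContinuousOn_of_continuous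
          (hf.continuousOn.mono hsub)
    have h := hcont.tendstoUniformlyOn (Metric.mem_closedBall_self hr.le)
    rwa [nhdsWithin_eq_nhds.2 (Metric.closedBall_mem_nhds c hr)] at h
  have hloc := (hunif.mono Metric.ball_subset_closedBall).tendstoLocallyUniformlyOn
  refine (hloc.deriv ?_ Metric.isOpen_ball).tendsto_at (Metric.mem_ball_self hr)
  filter_upwards [Metric.closedBall_mem_nhds c hr] with x hx z hz
  have hmem : (x, z) ∈ Ω := hsub ⟨hx, Metric.ball_subset_closedBall hz⟩
  have hfz : DifferentiableAt ℂ f (x, z) := hf.differentiableAt (hΩ.mem_nhds hmem)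
  exact (hfz.comp z (by fun_prop : DifferentiableAt ℂ (fun z => (x, z)) z)).differentiableWithinAt

theorem eq_zero_of_tendsto_of_eventually_eq_zero {h : ℂ → ℂ} {c L : ℂ}
    (hlim : Tendsto h (𝓝[≠] c) (𝓝 L)) (hzero : ∀ᶠ x in 𝓝[≠] c, h x = 0) : L = 0 :=
  tendsto_nhds_unique (hlim.congr' hzero) tendsto_const_nhds

theorem AnalyticAt.dslope_same {f : ℂ → ℂ} {c : ℂ} (hf : AnalyticAt ℂ f c) :
    AnalyticAt ℂ (dslope f c) c := by
  obtain ⟨p, hp⟩ := hf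
  exact ⟨_, hp.has_fpower_series_dslope_fslope⟩

theorem deriv_deriv_eq_two_mul_deriv_dslope {f : ℂ → ℂ} {c : ℂ} (hf : AnalyticAt ℂ f c) :
    deriv (deriv f) c = 2 * deriv (dslope f c) c := by
  have hf₁ := hf.dslope_same
  have hderiv : deriv f =ᶠ[𝓝 c] fun x => dslope f c x + (x - c) * deriv (dslope f c) x := by
    filter_upwards [hf₁.eventually_analyticAt] with x hx
    have hfac : f = fun x => f c + (x - c) * dslope f c x := by
      funext x
      rw [← smul_eq_mul, sub_smul_dslope]
      ring
    have h := (((hasDerivAt_id x).sub_const c).mul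
      hx.differentiableAt.hasDerivAt).const_add (f c)
    conv_lhs => rw [hfac]
    refine Eq.trans h.deriv ?_
    simp
  rw [hderiv.deriv_eq]
  have h := hf₁.differentiableAt.hasDerivAt.add (((hasDerivAt_id c).sub_const c).mul
    hf₁.deriv.differentiableAt.hasDerivAt)
  refine Eq.trans h.deriv ?_
  simp
  ring

/-- The first three Laurent coefficients at a double pole of the auxiliary linear equation. -/
theorem laurent_coeffs_eq_zero {f g k : ℂ → ℂ} {c k₀ A B C : ℂ}
    (hf : AnalyticAt ℂ f c) (hg : AnalyticAt ℂ g c) (hk : Tendsto k (𝓝 c) (𝓝 k₀))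
    (heq : ∀ᶠ x in 𝓝[≠] c, A + 2 * f x + (x - c) * (B + C * g x)
      + (x - c) ^ 2 * (k x - deriv (deriv f) x + g x * f x) = 0) :
    A + 2 * f c = 0 ∧ 2 * deriv f c + B + C * g c = 0 ∧
      C * deriv g c + k₀ + g c * f c = 0 := by
  have hs : Tendsto (fun x : ℂ => x - c) (𝓝 c) (𝓝 0) := by
    have h : Continuous fun x : ℂ => x - c := by fun_prop
    simpa using h.tendsto c
  have hfc : Tendsto f (𝓝 c) (𝓝 (f c)) := hf.continuousAt
  have hgc : Tendsto g (𝓝 c) (𝓝 (g c)) := hg.continuousAt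
  have hf₁ : Tendsto (dslope f c) (𝓝 c) (𝓝 (deriv f c)) := by
    simpa [ContinuousAt] using hf.dslope_same.continuousAt
  have hg₁ : Tendsto (dslope g c) (𝓝 c) (𝓝 (deriv g c)) := by
    simpa [ContinuousAt] using hg.dslope_same.continuousAt
  have hf₂ : Tendsto (dslope (dslope f c) c) (𝓝 c) (𝓝 (deriv (dslope f c) c)) := by
    simpa [ContinuousAt] using hf.dslope_same.dslope_same.continuousAt
  have hf'' : Tendsto (deriv (deriv f)) (𝓝 c) (𝓝 (deriv (deriv f) c)) :=
    hf.deriv.deriv.continuousAt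
  have hK := (hk.sub hf'').add (hgc.mul hfc)
  have factor (F : ℂ → ℂ) (x : ℂ) : (x - c) * dslope F c x = F x - F c := by
    rw [← smul_eq_mul, sub_smul_dslope]
  have h₀ : A + 2 * f c = 0 := by
    have hlim := ((hfc.const_mul 2).const_add A).add
      (hs.mul ((hgc.const_mul C).const_add B)) |>.add ((hs.pow 2).mul hK)
    simpa using eq_zero_of_tendsto_of_eventually_eq_zero (hlim.mono_left nhdsWithin_le_nhds) heq
  have hdiv : ∀ᶠ x in 𝓝[≠] c, 2 * dslope f c x + B + C * g x
      + (x - c) * (k x - deriv (deriv f) x + g x * f x) = 0 := by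
    filter_upwards [heq, self_mem_nhdsWithin] with x hx hne
    refine (mul_eq_zero.1 ?_).resolve_left (sub_ne_zero.2 hne)
    linear_combination hx - h₀ + 2 * factor f x
  have h₁ : 2 * deriv f c + B + C * g c = 0 := by
    have hlim := (((hf₁.const_mul 2).add_const B).add (hgc.const_mul C)).add (hs.mul hK)
    simpa using eq_zero_of_tendsto_of_eventually_eq_zero (hlim.mono_left nhdsWithin_le_nhds) hdiv
  have hdiv' : ∀ᶠ x in 𝓝[≠] c, 2 * dslope (dslope f c) c x + C * dslope g c x
      + (k x - deriv (deriv f) x + g x * f x) = 0 := by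
    filter_upwards [hdiv, self_mem_nhdsWithin] with x hx hne
    refine (mul_eq_zero.1 ?_).resolve_left (sub_ne_zero.2 hne)
    have hff := factor (dslope f c) x
    rw [_root_.dslope_same] at hff
    linear_combination hx - h₁ + 2 * hff + C * factor g x
  refine ⟨h₀, h₁, ?_⟩
  have hlim := ((hf₂.const_mul 2).add (hg₁.const_mul C)).add hK
  have h₂ := eq_zero_of_tendsto_of_eventually_eq_zero (hlim.mono_left nhdsWithin_le_nhds) hdiv'
  linear_combination h₂ + deriv_deriv_eq_two_mul_deriv_dslope hf

theorem analyticAt_slice_fst {Ω : Set (ℂ × ℂ)} (hΩ : IsOpen Ω) {f : ℂ × ℂ → ℂ}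
    (hf : DifferentiableOn ℂ f Ω) {x y : ℂ} (hx : (x, y) ∈ Ω) :
    AnalyticAt ℂ (fun x => f (x, y)) x := by
  have hcont : Continuous fun x : ℂ => (x, y) := by fun_prop
  have hdiff : DifferentiableOn ℂ (fun x => f (x, y)) ((fun x => (x, y)) ⁻¹' Ω) :=
    hf.comp (by fun_prop) fun _ h => h
  exact hdiff.analyticAt ((hΩ.preimage hcont).mem_nhds hx)

theorem pdy_psiPole {x₀ α : ℂ → ℂ} {ψt : ℂ × ℂ → ℂ} {x y : ℂ}
    (hx₀ : DifferentiableAt ℂ x₀ y) (hα : DifferentiableAt ℂ α y)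
    (hψt : DifferentiableAt ℂ ψt (x, y)) (hne : x ≠ x₀ y) :
    pdy (psiPole x₀ α ψt) (x, y) =
      deriv α y / (x - x₀ y) + α y * deriv x₀ y / (x - x₀ y) ^ 2 + pdy ψt (x, y) := by
  have hs : x - x₀ y ≠ 0 := sub_ne_zero.2 hne
  have hψy : DifferentiableAt ℂ (fun z => ψt (x, z)) y :=
    hψt.comp y (by fun_prop : DifferentiableAt ℂ (fun z => (x, z)) y)
  have h := (hα.hasDerivAt.div (hx₀.hasDerivAt.const_sub x) hs).add hψy.hasDerivAt
  refine Eq.trans h.deriv ?_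
  simp only [pdy]
  field_simp
  ring

theorem pdx_pdx_psiPole {x₀ α : ℂ → ℂ} {ψt : ℂ × ℂ → ℂ} {x y : ℂ}
    (hψt : AnalyticAt ℂ (fun x => ψt (x, y)) x) (hne : x ≠ x₀ y) :
    pdx (pdx (psiPole x₀ α ψt)) (x, y) =
      2 * α y / (x - x₀ y) ^ 3 + deriv (deriv fun x => ψt (x, y)) x := by
  have hs : x - x₀ y ≠ 0 := sub_ne_zero.2 hne
  have hfirst : (fun x => pdx (psiPole x₀ α ψt) (x, y)) =ᶠ[𝓝 x]
      fun x => -α y / (x - x₀ y) ^ 2 + deriv (fun x => ψt (x, y)) x := by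
    filter_upwards [hψt.eventually_analyticAt, isOpen_ne.mem_nhds hne] with z hz hzne
    have hsz : z - x₀ y ≠ 0 := sub_ne_zero.2 hzne
    have h := ((hasDerivAt_const z (α y)).div ((hasDerivAt_id z).sub_const (x₀ y)) hsz).add
      hz.differentiableAt.hasDerivAt
    refine Eq.trans h.deriv ?_
    simp
  refine Eq.trans hfirst.deriv_eq ?_
  have h := ((hasDerivAt_const x (-α y)).div (((hasDerivAt_id x).sub_const (x₀ y)).pow 2)
    (pow_ne_zero 2 hs)).add hψt.deriv.differentiableAt.hasDerivAt
  refine Eq.trans h.deriv ?_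
  simp
  field_simp

theorem hasDerivAt_comp_graph {f : ℂ × ℂ → ℂ} {x₀ : ℂ → ℂ} {y : ℂ}
    (hf : DifferentiableAt ℂ f (x₀ y, y)) (hx₀ : DifferentiableAt ℂ x₀ y) :
    HasDerivAt (fun y => f (x₀ y, y))
      (pdx f (x₀ y, y) * deriv x₀ y + pdy f (x₀ y, y)) y := by
  have hF := hf.hasFDerivAt
  have hx : pdx f (x₀ y, y) = fderiv ℂ f (x₀ y, y) (1, 0) :=
    (hF.comp_hasDerivAt (x₀ y) ((hasDerivAt_id _).prodMk (hasDerivAt_const _ y))).deriv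
  have hy : pdy f (x₀ y, y) = fderiv ℂ f (x₀ y, y) (0, 1) :=
    (hF.comp_hasDerivAt y ((hasDerivAt_const _ (x₀ y)).prodMk (hasDerivAt_id y))).deriv
  have h := HasFDerivAt.comp_hasDerivAt (f := fun y => (x₀ y, y)) y hF
    (hx₀.hasDerivAt.prodMk (hasDerivAt_id y))
  refine h.congr_deriv ?_
  have hdecomp : (deriv x₀ y, (1 : ℂ)) = deriv x₀ y • ((1 : ℂ), (0 : ℂ)) + (0, 1) := by simp
  rw [hdecomp, map_add, map_smul, hx, hy, smul_eq_mul, mul_comm]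


/-- Lemma 3.1 of the paper: if
`ψ = α(y)/(x−x₀(y)) + ψ̃` with `u = 2/(x−x₀(y))² + ũ` solves
`∂_yψ − ∂_x²ψ + uψ = 0` away from the pole, then with `w = ∂_xũ(x₀(y),y)` one has
`α(x₀'' − 2w) = 0`; in particular `x₀'' = 2w` wherever α ≠ 0. -/
theorem stmt_7 (D : Set ℂ) (hD : IsOpen D)
    (x₀ α : ℂ → ℂ) (hx₀ : DifferentiableOn ℂ x₀ D) (hα : DifferentiableOn ℂ α D)
    (Ω : Set (ℂ × ℂ)) (hΩ : IsOpen Ω)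
    (hgraph : ∀ y ∈ D, ((x₀ y, y) : ℂ × ℂ) ∈ Ω)
    (ut ψt : ℂ × ℂ → ℂ)
    (hut : DifferentiableOn ℂ ut Ω) (hψt : DifferentiableOn ℂ ψt Ω)
    (heq : ∀ q ∈ Ω, q.2 ∈ D → q.1 ≠ x₀ q.2 →
      pdy (psiPole x₀ α ψt) q - pdx (pdx (psiPole x₀ α ψt)) q
        + uPole x₀ ut q * psiPole x₀ α ψt q = 0) :
    ∀ y ∈ D,
      α y * (deriv (deriv x₀) y - 2 * pdx ut (x₀ y, y)) = 0 ∧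
      (α y ≠ 0 → deriv (deriv x₀) y = 2 * pdx ut (x₀ y, y)) := by
  have coeffs : ∀ y ∈ D,
      α y * deriv x₀ y + 2 * ψt (x₀ y, y) = 0 ∧
      2 * pdx ψt (x₀ y, y) + deriv α y + α y * ut (x₀ y, y) = 0 ∧
      α y * pdx ut (x₀ y, y) + pdy ψt (x₀ y, y) + ut (x₀ y, y) * ψt (x₀ y, y) = 0 := by
    intro y hy
    have hgr := hgraph y hy
    refine laurent_coeffs_eq_zero (f := fun x => ψt (x, y)) (g := fun x => ut (x, y))
      (analyticAt_slice_fst hΩ hψt hgr) (analyticAt_slice_fst hΩ hut hgr)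
      (tendsto_pdy_fst hΩ hψt hgr) ?_
    have hcont : Continuous fun x : ℂ => (x, y) := by fun_prop
    filter_upwards [nhdsWithin_le_nhds ((hΩ.preimage hcont).mem_nhds hgr),
      self_mem_nhdsWithin] with x hxΩ hne
    have h := heq (x, y) hxΩ hy hne
    rw [pdy_psiPole (hx₀.differentiableAt (hD.mem_nhds hy)) (hα.differentiableAt (hD.mem_nhds hy))
      (hψt.differentiableAt (hΩ.mem_nhds hxΩ)) hne,
      pdx_pdx_psiPole (analyticAt_slice_fst hΩ hψt hxΩ) hne] at h
    simp only [uPole, psiPole] at h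
    have hs : x - x₀ y ≠ 0 := sub_ne_zero.2 hne
    rw [← mul_zero ((x - x₀ y) ^ 2), ← h]
    field_simp
    ring
  intro y hy
  have hmain : α y * (deriv (deriv x₀) y - 2 * pdx ut (x₀ y, y)) = 0 := by
    obtain ⟨h₀, h₁, h₂⟩ := coeffs y hy
    have hxy := hx₀.differentiableAt (hD.mem_nhds hy)
    have hx' := (hx₀.deriv hD).differentiableAt (hD.mem_nhds hy)
    have hderiv := ((hα.differentiableAt (hD.mem_nhds hy)).hasDerivAt.mul hx'.hasDerivAt).add
      ((hasDerivAt_comp_graph (hψt.differentiableAt (hΩ.mem_nhds (hgraph y hy))) hxy).const_mul 2)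
    have hzero : (fun y => α y * deriv x₀ y + 2 * ψt (x₀ y, y)) =ᶠ[𝓝 y] fun _ => 0 := by
      filter_upwards [hD.mem_nhds hy] with z hz using (coeffs z hz).1
    have h₃ := hderiv.unique ((hasDerivAt_const y (0 : ℂ)).congr_of_eventuallyEq hzero)
    linear_combination h₃ - deriv x₀ y * h₁ - 2 * h₂ + ut (x₀ y, y) * h₀
  exact ⟨hmain, fun hαy => sub_eq_zero.1 ((mul_eq_zero.1 hmain).resolve_left hαy)⟩
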